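/- Let k be a field, Ω a commutative semigroup, A a k-vector space, and ≺_ω, ≻_ω : A × A → A (ω ∈ Ω) two families of k-bilinear operations. Let ≺, ≻ be k-bilinear operations on the tensor product A ⊗_k k[Ω] (where k[Ω] is the semigroup algebra of Ω over k) satisfying, on pure tensors, (x ⊗ α) ≺ (y ⊗ β) = (x ≺_β y) ⊗ αβ and (x ⊗ α) ≻ (y ⊗ β) = (x ≻_α y) ⊗ αβ for all x, y ∈ A and α, β ∈ Ω. Then (A ⊗_k k[Ω], ≺, ≻) is a pre-anti-flexible algebra if and only if (A, ≺_ω, ≻_ω, Ω) is a pre-anti-flexible family algebra. -/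

import Mathlib

open TensorProduct

/-!
Both pre-anti-flexible identities say that an associator of `(x, y, z)` equals an associator of
`(z, y, x)`. On pure tensors, each associator of `A ⊗ k[Ω]` is the corresponding associator of the
family tensored with the basis element `α * β * γ`. Since associators are trilinear, it is enough to
test the identities on pure tensors, where the basis element can be cancelled because
`α * β * γ = γ * β * α`.
-/

section TensorBasis

variable {R ι A B N : Type*} [CommSemiring R] [AddCommMonoid A] [Module R A]
  [AddCommMonoid B] [Module R B] [AddCommMonoid N] [Module R N]

theorem linearMap_ext_tmul_basis (b : Module.Basis ι R B) {f g : A ⊗[R] B →ₗ[R] N}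
    (h : ∀ x i, f (x ⊗ₜ b i) = g (x ⊗ₜ b i)) : f = g :=
  TensorProduct.ext <| LinearMap.ext fun x ↦ b.ext (h x)

theorem trilinearMap_ext_tmul_basis (b : Module.Basis ι R B)
    {F G : A ⊗[R] B →ₗ[R] A ⊗[R] B →ₗ[R] A ⊗[R] B →ₗ[R] N}
    (h : ∀ x i y j z l,
      F (x ⊗ₜ b i) (y ⊗ₜ b j) (z ⊗ₜ b l) = G (x ⊗ₜ b i) (y ⊗ₜ b j) (z ⊗ₜ b l)) : F = G :=
  linearMap_ext_tmul_basis b fun x i ↦ linearMap_ext_tmul_basis b fun y j ↦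
    linearMap_ext_tmul_basis b fun z l ↦ h x i y j z l

theorem tmul_basis_right_injective (b : Module.Basis ι R B) (i : ι) :
    Function.Injective fun x : A ↦ x ⊗ₜ[R] b i := fun x y h ↦ by
  classical
  simpa using DFunLike.congr_fun (congrArg (equivFinsuppOfBasisRight b) h) i

/-- The trilinear map `x y z ↦ F z y x`. -/
def reverseTrilinear (F : A →ₗ[R] A →ₗ[R] A →ₗ[R] N) : A →ₗ[R] A →ₗ[R] A →ₗ[R] N :=
  (LinearMap.lflip (R₀ := R)).toLinearMap ∘ₗ ((LinearMap.lflip (R₀ := R)).toLinearMap ∘ₗ F).flip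

@[simp]
theorem reverseTrilinear_apply (F : A →ₗ[R] A →ₗ[R] A →ₗ[R] N) (x y z : A) :
    reverseTrilinear F x y z = F z y x :=
  rfl

theorem forall_eq_reverse_iff_of_tmul_basis [Mul ι]
    (hι : ∀ i j l : ι, i * j * l = l * j * i) (b : Module.Basis ι R B)
    {F G : A ⊗[R] B →ₗ[R] A ⊗[R] B →ₗ[R] A ⊗[R] B →ₗ[R] A ⊗[R] B}
    {f g : ι → ι → ι → A → A → A → A}
    (hF : ∀ x i y j z l,
      F (x ⊗ₜ b i) (y ⊗ₜ b j) (z ⊗ₜ b l) = f i j l x y z ⊗ₜ b (i * j * l))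
    (hG : ∀ x i y j z l,
      G (x ⊗ₜ b i) (y ⊗ₜ b j) (z ⊗ₜ b l) = g i j l x y z ⊗ₜ b (i * j * l)) :
    (∀ X Y Z, F X Y Z = G Z Y X) ↔ ∀ i j l x y z, f i j l x y z = g l j i z y x := by
  constructor
  · intro h i j l x y z
    apply tmul_basis_right_injective b (i * j * l)
    simpa only [hF, hG, hι l j i] using h (x ⊗ₜ b i) (y ⊗ₜ b j) (z ⊗ₜ b l)
  · intro h X Y Z
    have hFG : F = reverseTrilinear G := trilinearMap_ext_tmul_basis b fun x i y j z l ↦ by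
      rw [reverseTrilinear_apply, hF, hG, h, hι]
    rw [hFG, reverseTrilinear_apply]

end TensorBasis

section Algebra

variable {R M : Type*} [CommSemiring R] [AddCommGroup M] [Module R M]

/-- The trilinear map `x y z ↦ (x ≻ y) ≺ z - x ≻ (y ≺ z)`, where `prec` is `≺` and `succ`
is `≻`. -/
def middleAssociator (prec succ : M →ₗ[R] M →ₗ[R] M) : M →ₗ[R] M →ₗ[R] M →ₗ[R] M :=
  succ.compr₂ prec - LinearMap.lcomp R _ prec ∘ₗ LinearMap.llcomp R M M M ∘ₗ succ

/-- The trilinear map `x y z ↦ (x ≻ y + x ≺ y) ≻ z - x ≻ (y ≻ z)`. -/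
def leftAssociator (prec succ : M →ₗ[R] M →ₗ[R] M) : M →ₗ[R] M →ₗ[R] M →ₗ[R] M :=
  (succ + prec).compr₂ succ - LinearMap.lcomp R _ succ ∘ₗ LinearMap.llcomp R M M M ∘ₗ succ

/-- The trilinear map `x y z ↦ (x ≺ y) ≺ z - x ≺ (y ≻ z + y ≺ z)`. -/
def rightAssociator (prec succ : M →ₗ[R] M →ₗ[R] M) : M →ₗ[R] M →ₗ[R] M →ₗ[R] M :=
  prec.compr₂ prec - LinearMap.lcomp R _ (succ + prec) ∘ₗ LinearMap.llcomp R M M M ∘ₗ prec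

variable (prec succ : M →ₗ[R] M →ₗ[R] M) (x y z : M)

theorem middleAssociator_apply : middleAssociator prec succ x y z =
    prec (succ x y) z - succ x (prec y z) :=
  rfl

theorem leftAssociator_apply : leftAssociator prec succ x y z =
    succ (succ x y + prec x y) z - succ x (succ y z) :=
  rfl

theorem rightAssociator_apply : rightAssociator prec succ x y z =
    prec (prec x y) z - prec x (succ y z + prec y z) :=
  rfl

/-- Pre-anti-flexible algebras: the bilinear operations `≺ = prec` and `≻ = succ` satisfy both
identities, each of which compares an associator of `(x, y, z)` with one of `(z, y, x)`. -/
def IsPreAntiFlexible : Prop :=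
  (∀ x y z, middleAssociator prec succ x y z = middleAssociator prec succ z y x) ∧
    ∀ x y z, leftAssociator prec succ x y z = rightAssociator prec succ z y x

end Algebra

section Family

variable {Ω A : Type*} [AddCommGroup A]

/-- The family version `(x ≻_α y) ≺_β z - x ≻_α (y ≺_β z)` of `middleAssociator`. -/
def familyMiddleAssociator (prec succ : Ω → A → A → A) (α β : Ω) (x y z : A) : A :=
  prec β (succ α x y) z - succ α x (prec β y z)

variable [Mul Ω]

/-- The family version `(x ≻_α y + x ≺_β y) ≻_{αβ} z - x ≻_α (y ≻_β z)` of `leftAssociator`. -/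
def familyLeftAssociator (prec succ : Ω → A → A → A) (α β : Ω) (x y z : A) : A :=
  succ (α * β) (succ α x y + prec β x y) z - succ α x (succ β y z)

/-- The family version `(x ≺_α y) ≺_β z - x ≺_{αβ} (y ≻_α z + y ≺_β z)` of `rightAssociator`. -/
def familyRightAssociator (prec succ : Ω → A → A → A) (α β : Ω) (x y z : A) : A :=
  prec β (prec α x y) z - prec (α * β) x (succ α y z + prec β y z)

/-- The identities of a pre-anti-flexible family algebra, for operations `≺_ω = prec ω` and
`≻_ω = succ ω`. Bilinearity is not part of the predicate. -/
def IsPreAntiFlexibleFamily (prec succ : Ω → A → A → A) : Prop :=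
  (∀ α β x y z, familyMiddleAssociator prec succ α β x y z =
      familyMiddleAssociator prec succ β α z y x) ∧
    ∀ α β x y z, familyLeftAssociator prec succ α β x y z =
      familyRightAssociator prec succ β α z y x

end Family

section Tensor

variable {k Ω A B : Type*} [CommSemiring k] [Semigroup Ω] [AddCommGroup A] [Module k A]
  [AddCommMonoid B] [Module k B] {prec succ : Ω → A → A → A}
  {P S : A ⊗[k] B →ₗ[k] A ⊗[k] B →ₗ[k] A ⊗[k] B}

theorem middleAssociator_tmul {b : Ω → B}
    (hP : ∀ x y α β, P (x ⊗ₜ b α) (y ⊗ₜ b β) = prec β x y ⊗ₜ b (α * β))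
    (hS : ∀ x y α β, S (x ⊗ₜ b α) (y ⊗ₜ b β) = succ α x y ⊗ₜ b (α * β))
    (x : A) (α : Ω) (y : A) (β : Ω) (z : A) (γ : Ω) :
    middleAssociator P S (x ⊗ₜ b α) (y ⊗ₜ b β) (z ⊗ₜ b γ) =
      familyMiddleAssociator prec succ α γ x y z ⊗ₜ b (α * β * γ) := by
  simp only [middleAssociator_apply, familyMiddleAssociator, hP, hS, sub_tmul, mul_assoc]

theorem leftAssociator_tmul {b : Ω → B}
    (hP : ∀ x y α β, P (x ⊗ₜ b α) (y ⊗ₜ b β) = prec β x y ⊗ₜ b (α * β))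
    (hS : ∀ x y α β, S (x ⊗ₜ b α) (y ⊗ₜ b β) = succ α x y ⊗ₜ b (α * β))
    (x : A) (α : Ω) (y : A) (β : Ω) (z : A) (γ : Ω) :
    leftAssociator P S (x ⊗ₜ b α) (y ⊗ₜ b β) (z ⊗ₜ b γ) =
      familyLeftAssociator prec succ α β x y z ⊗ₜ b (α * β * γ) := by
  simp only [leftAssociator_apply, familyLeftAssociator, hP, hS, ← add_tmul, sub_tmul, mul_assoc]

theorem rightAssociator_tmul {b : Ω → B}
    (hP : ∀ x y α β, P (x ⊗ₜ b α) (y ⊗ₜ b β) = prec β x y ⊗ₜ b (α * β))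
    (hS : ∀ x y α β, S (x ⊗ₜ b α) (y ⊗ₜ b β) = succ α x y ⊗ₜ b (α * β))
    (x : A) (α : Ω) (y : A) (β : Ω) (z : A) (γ : Ω) :
    rightAssociator P S (x ⊗ₜ b α) (y ⊗ₜ b β) (z ⊗ₜ b γ) =
      familyRightAssociator prec succ β γ x y z ⊗ₜ b (α * β * γ) := by
  simp only [rightAssociator_apply, familyRightAssociator, hP, hS, ← add_tmul, sub_tmul, mul_assoc]

theorem preAntiFlexibleFamily_iff_tensor_preAntiFlexible_general
    (hΩ : ∀ α β γ : Ω, α * β * γ = γ * β * α) (b : Module.Basis Ω k B)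
    (hP : ∀ x y α β, P (x ⊗ₜ b α) (y ⊗ₜ b β) = prec β x y ⊗ₜ b (α * β))
    (hS : ∀ x y α β, S (x ⊗ₜ b α) (y ⊗ₜ b β) = succ α x y ⊗ₜ b (α * β)) :
    IsPreAntiFlexible P S ↔ IsPreAntiFlexibleFamily prec succ := by
  have middle_iff := forall_eq_reverse_iff_of_tmul_basis hΩ b
    (f := fun α _ γ ↦ familyMiddleAssociator prec succ α γ)
    (g := fun α _ γ ↦ familyMiddleAssociator prec succ α γ)
    (middleAssociator_tmul hP hS) (middleAssociator_tmul hP hS)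
  have left_right_iff := forall_eq_reverse_iff_of_tmul_basis hΩ b
    (f := fun α β _ ↦ familyLeftAssociator prec succ α β)
    (g := fun _ β γ ↦ familyRightAssociator prec succ β γ)
    (leftAssociator_tmul hP hS) (rightAssociator_tmul hP hS)
  rw [IsPreAntiFlexible, middle_iff, left_right_iff]
  -- Each identity involves only two of the three indices, so the remaining one is arbitrary.
  exact ⟨fun h ↦ ⟨fun α β ↦ h.1 α α β, fun α β ↦ h.2 α β α⟩,
    fun h ↦ ⟨fun α _ γ ↦ h.1 α γ, fun α β _ ↦ h.2 α β⟩⟩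

end Tensor

/-- `(A ⊗ k[Ω], ≺, ≻)` with `(x⊗α) ≺ (y⊗β) = (x ≺_β y) ⊗ αβ` and
`(x⊗α) ≻ (y⊗β) = (x ≻_α y) ⊗ αβ` is a pre-anti-flexible algebra iff
`(A, ≺_ω, ≻_ω, Ω)` is a pre-anti-flexible family algebra. -/
theorem preAntiFlexibleFamily_iff_tensor_preAntiFlexible
    (k : Type*) [Field k] (Ω : Type*) [CommSemigroup Ω]
    (A : Type*) [AddCommGroup A] [Module k A]
    (prec succ : Ω → A →ₗ[k] A →ₗ[k] A)
    (P S : A ⊗[k] MonoidAlgebra k Ω →ₗ[k]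
      A ⊗[k] MonoidAlgebra k Ω →ₗ[k] A ⊗[k] MonoidAlgebra k Ω)
    (hP : ∀ (x y : A) (α β : Ω),
      P (x ⊗ₜ MonoidAlgebra.single α (1 : k)) (y ⊗ₜ MonoidAlgebra.single β (1 : k)) =
        (prec β x y) ⊗ₜ MonoidAlgebra.single (α * β) (1 : k))
    (hS : ∀ (x y : A) (α β : Ω),
      S (x ⊗ₜ MonoidAlgebra.single α (1 : k)) (y ⊗ₜ MonoidAlgebra.single β (1 : k)) =
        (succ α x y) ⊗ₜ MonoidAlgebra.single (α * β) (1 : k)) :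
    ((∀ X Y Z : A ⊗[k] MonoidAlgebra k Ω,
        P (S X Y) Z - S X (P Y Z) = P (S Z Y) X - S Z (P Y X)) ∧
     (∀ X Y Z : A ⊗[k] MonoidAlgebra k Ω,
        S (S X Y + P X Y) Z - S X (S Y Z) =
          P (P Z Y) X - P Z (S Y X + P Y X))) ↔
    ((∀ (α β : Ω) (x y z : A),
        prec β (succ α x y) z - succ α x (prec β y z) =
          prec α (succ β z y) x - succ β z (prec α y x)) ∧
     (∀ (α β : Ω) (x y z : A),
        succ (α * β) (succ α x y + prec β x y) z - succ α x (succ β y z) =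
          prec α (prec β z y) x - prec (β * α) z (succ β y x + prec α y x))) := by
  have hΩ (α β γ : Ω) : α * β * γ = γ * β * α := by rw [mul_comm, mul_comm α, mul_assoc]
  exact preAntiFlexibleFamily_iff_tensor_preAntiFlexible_general
    (prec := fun ω x y ↦ prec ω x y) (succ := fun ω x y ↦ succ ω x y) hΩ
    (MonoidAlgebra.basis Ω k) hP hS
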